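/- Let X be a Banach function space over a finite measure space and m : Σ → X a σ-additive vector measure. Assume: (a) X has the weak Banach-Saks property; (b) m is separable and positive, i.e. m(A) ∈ X⁺ for every A ∈ Σ; (c) L¹(m), regarded as a B.f.s. over a Rybakov control measure, has the subsequence splitting property. Then L¹(m) has the weak Banach-Saks property. -/

import Mathlib

open MeasureTheory Filter Topology
open scoped ENNReal

noncomputable section

namespace Paper

variable {Ω : Type*} [MeasurableSpace Ω]
variable {X : Type*} [NormedAddCommGroup X] [NormedSpace ℝ X]

/-- The signed measure `x* ∘ m` for a functional `x*` and vector measure `m`. -/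
def dualApply (m : VectorMeasure Ω X) (x : X →L[ℝ] ℝ) : SignedMeasure Ω :=
  m.mapRange x.toLinearMap.toAddMonoidHom x.continuous

/-- The semivariation `‖m‖(A)` of a vector measure. -/
def semivar (m : VectorMeasure Ω X) (A : Set Ω) : ℝ≥0∞ :=
  ⨆ x : {x : X →L[ℝ] ℝ // ‖x‖ ≤ 1}, (dualApply m x.1).totalVariation A

/-- `P` holds `‖m‖`-almost everywhere. -/
def MAE (m : VectorMeasure Ω X) (P : Ω → Prop) : Prop :=
  ∃ N : Set Ω, MeasurableSet N ∧ semivar m N = 0 ∧ ∀ ω ∉ N, P ω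

/-- The integral `∫_A f ds` of a real function with respect to a signed measure. -/
def sIntegral (s : SignedMeasure Ω) (f : Ω → ℝ) (A : Set Ω) : ℝ :=
  (∫ ω in A, f ω ∂s.toJordanDecomposition.posPart) -
    ∫ ω in A, f ω ∂s.toJordanDecomposition.negPart

/-- `f` is integrable with respect to the vector measure `m` (Bartle-Dunford-Schwartz). -/
def MIntegrable (m : VectorMeasure Ω X) (f : Ω → ℝ) : Prop :=
  Measurable f ∧
  (∀ x : X →L[ℝ] ℝ, Integrable f ((dualApply m x).totalVariation)) ∧
  (∀ A : Set Ω, MeasurableSet A →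
    ∃ v : X, ∀ x : X →L[ℝ] ℝ, x v = sIntegral (dualApply m x) f A)

open Classical in
/-- The vector integral `∫_A f dm ∈ X`. -/
def mIntegral (m : VectorMeasure Ω X) (f : Ω → ℝ) (A : Set Ω) : X :=
  if h : ∃ v : X, ∀ x : X →L[ℝ] ℝ, x v = sIntegral (dualApply m x) f A then h.choose
  else 0

/-- The norm of `L¹(m)`: `‖f‖ = sup_{‖x*‖ ≤ 1} ∫ |f| d|x*m|`. -/
def mNorm (m : VectorMeasure Ω X) (f : Ω → ℝ) : ℝ :=
  ⨆ x : {x : X →L[ℝ] ℝ // ‖x‖ ≤ 1}, ∫ ω, |f ω| ∂(dualApply m x.1).totalVariation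

/-- The vector measure `m` is separable: the pseudometric space `(Σ, d_m)`,
`d_m(A,B) = ‖m‖(A △ B)`, is separable. -/
def SeparableVM (m : VectorMeasure Ω X) : Prop :=
  ∃ D : Set (Set Ω), D.Countable ∧ (∀ B ∈ D, MeasurableSet B) ∧
    ∀ A : Set Ω, MeasurableSet A → ∀ ε : ℝ, 0 < ε →
      ∃ B ∈ D, semivar m (symmDiff A B) < ENNReal.ofReal ε

section FunctionSpace

variable {S : Type*} [MeasurableSpace S]

/-- `T` is a bounded linear functional on the function space determined by the
membership predicate `mem` and the norm `nrm`. -/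
def IsBddLinFunctional (mem : (S → ℝ) → Prop) (nrm : (S → ℝ) → ℝ)
    (T : (S → ℝ) → ℝ) : Prop :=
  (∀ f g, mem f → mem g → T (f + g) = T f + T g) ∧
  (∀ (c : ℝ) (f), mem f → T (c • f) = c * T f) ∧
  (∃ C : ℝ, ∀ f, mem f → |T f| ≤ C * nrm f)

/-- `f` is a weakly null sequence in the function space `(mem, nrm)`. -/
def WeaklyNullSeq (mem : (S → ℝ) → Prop) (nrm : (S → ℝ) → ℝ) (f : ℕ → S → ℝ) : Prop :=
  ∀ T : (S → ℝ) → ℝ, IsBddLinFunctional mem nrm T →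
    Tendsto (fun n => T (f n)) atTop (nhds 0)

/-- The set `K` has uniformly absolutely continuous norm in the function space with
norm `nrm` over the measure `μ`. -/
def UnifACNorm (μ : Measure S) (nrm : (S → ℝ) → ℝ) (K : Set (S → ℝ)) : Prop :=
  ∀ ε : ℝ, 0 < ε → ∃ δ : ℝ, 0 < δ ∧ ∀ A : Set S, MeasurableSet A →
    μ A < ENNReal.ofReal δ → ∀ f ∈ K, nrm (A.indicator f) ≤ ε

/-- The subsequence splitting property for the function space `(mem, nrm)` over `μ`. -/
def HasSSP (μ : Measure S) (mem : (S → ℝ) → Prop) (nrm : (S → ℝ) → ℝ) : Prop :=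
  ∀ f : ℕ → S → ℝ, (∀ n, mem (f n)) → (∃ C : ℝ, ∀ n, nrm (f n) ≤ C) →
    ∃ σ : ℕ → ℕ, StrictMono σ ∧
      ∃ g h : ℕ → S → ℝ,
        (∀ n, mem (g n)) ∧ (∀ n, mem (h n)) ∧
        (∀ n, f (σ n) = g n + h n) ∧
        (∀ n, (fun s => g n s * h n s) =ᵐ[μ] 0) ∧
        UnifACNorm μ nrm (Set.range g) ∧
        (∀ i j, i ≠ j → (fun s => h i s * h j s) =ᵐ[μ] 0)

/-- The weak Banach-Saks property for the function space `(mem, nrm)`. -/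
def HasWBS (mem : (S → ℝ) → Prop) (nrm : (S → ℝ) → ℝ) : Prop :=
  ∀ f : ℕ → S → ℝ, (∀ n, mem (f n)) → WeaklyNullSeq mem nrm f →
    ∃ σ : ℕ → ℕ, StrictMono σ ∧
      Tendsto (fun n : ℕ => nrm ((n : ℝ)⁻¹ • ∑ k ∈ Finset.range n, f (σ k))) atTop (nhds 0)

end FunctionSpace

/-- A Banach function space over `(S, μ)`: an (abstract) normed space `X` together with
a linear embedding `J` into measurable functions on `S`, separating points modulo
`μ`-null sets and satisfying the ideal property. -/
structure BFS (S : Type*) [MeasurableSpace S] (μ : Measure S)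
    (X : Type*) [NormedAddCommGroup X] [NormedSpace ℝ X] where
  J : X →ₗ[ℝ] (S → ℝ)
  aemeasurable : ∀ x : X, AEMeasurable (J x) μ
  eq_zero : ∀ x : X, J x =ᵐ[μ] 0 → x = 0
  ideal : ∀ (x : X) (g : S → ℝ), AEMeasurable g μ →
    (∀ᵐ s ∂μ, |g s| ≤ |J x s|) → ∃ y : X, J y =ᵐ[μ] g ∧ ‖y‖ ≤ ‖x‖

variable {S : Type*} [MeasurableSpace S] {μ : Measure S}

/-- The set `K ⊆ X` has uniformly absolutely continuous norm in the B.f.s. `X`. -/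
def BFS.UnifAC (B : BFS S μ X) (K : Set X) : Prop :=
  ∀ ε : ℝ, 0 < ε → ∃ δ : ℝ, 0 < δ ∧ ∀ A : Set S, MeasurableSet A →
    μ A < ENNReal.ofReal δ → ∀ x ∈ K, ∀ y : X, B.J y =ᵐ[μ] A.indicator (B.J x) → ‖y‖ ≤ ε

/-- The B.f.s. `X` has absolutely continuous norm. -/
def BFS.ACNorm (B : BFS S μ X) : Prop :=
  ∀ x : X, ∀ ε : ℝ, 0 < ε → ∃ δ : ℝ, 0 < δ ∧ ∀ A : Set S, MeasurableSet A →
    μ A < ENNReal.ofReal δ → ∀ y : X, B.J y =ᵐ[μ] A.indicator (B.J x) → ‖y‖ ≤ ε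

/-- The subsequence splitting property for the B.f.s. `X`. -/
def BFS.SSP (B : BFS S μ X) : Prop :=
  ∀ f : ℕ → X, (∃ C : ℝ, ∀ n, ‖f n‖ ≤ C) →
    ∃ σ : ℕ → ℕ, StrictMono σ ∧
      ∃ g h : ℕ → X,
        (∀ n, f (σ n) = g n + h n) ∧
        (∀ n, (fun s => B.J (g n) s * B.J (h n) s) =ᵐ[μ] 0) ∧
        B.UnifAC (Set.range g) ∧
        (∀ i j, i ≠ j → (fun s => B.J (h i) s * B.J (h j) s) =ᵐ[μ] 0)

/-- The weak Banach-Saks property for a normed space `Z`: every weakly null sequence has a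
subsequence whose arithmetic means converge to zero in norm. -/
def WeakBanachSaks (Z : Type*) [NormedAddCommGroup Z] [NormedSpace ℝ Z] : Prop :=
  ∀ z : ℕ → Z, (∀ φ : Z →L[ℝ] ℝ, Tendsto (fun n => φ (z n)) atTop (nhds 0)) →
    ∃ σ : ℕ → ℕ, StrictMono σ ∧
      Tendsto (fun n : ℕ => ‖(n : ℝ)⁻¹ • ∑ k ∈ Finset.range n, z (σ k)‖) atTop (nhds 0)


lemma hilbert_weak {H : Type*} [NormedAddCommGroup H] [InnerProductSpace ℝ H] [CompleteSpace H]
    (x : ℕ → H) (C : ℝ) (hC : ∀ n, ‖x n‖ ≤ C) :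
    ∃ u : H, ∀ y : H, Tendsto (fun n => inner ℝ (x n - u) y) (hyperfilter ℕ : Filter ℕ) (𝓝 0) := by
  let φ : ℕ → WeakDual ℝ H := fun n => StrongDual.toWeakDual (innerSL ℝ (x n))
  have hK := WeakDual.isCompact_closedBall (𝕜 := ℝ) (E := H) 0 C
  have hmem : ∀ n, φ n ∈ WeakDual.toStrongDual ⁻¹' Metric.closedBall (0 : StrongDual ℝ H) C := by
    intro n
    simp only [Set.mem_preimage, Metric.mem_closedBall, dist_zero_right]
    change ‖innerSL ℝ (x n)‖ ≤ C
    rw [innerSL_apply_norm]; exact hC n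
  obtain ⟨p, -, hp⟩ := hK.ultrafilter_le_nhds ((hyperfilter ℕ).map φ) (by
    simp only [le_principal_iff, Ultrafilter.coe_map]
    exact mem_map.2 (Filter.univ_mem' hmem))
  have ht : Tendsto φ (hyperfilter ℕ : Filter ℕ) (𝓝 p) := hp
  refine ⟨(InnerProductSpace.toDual ℝ H).symm (WeakDual.toStrongDual p), fun y => ?_⟩
  have h1 : Tendsto (fun n => φ n y) (hyperfilter ℕ : Filter ℕ) (𝓝 (p y)) :=
    ((WeakDual.eval_continuous y).tendsto p).comp ht
  have h2 := h1.sub_const (p y)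
  rw [sub_self] at h2
  refine h2.congr fun n => ?_
  rw [inner_sub_left, InnerProductSpace.toDual_symm_apply]
  rfl

lemma hilbert_BS {H : Type*} [NormedAddCommGroup H] [InnerProductSpace ℝ H] [CompleteSpace H]
    (x : ℕ → H) (C : ℝ) (hC : ∀ n, ‖x n‖ ≤ C) :
    ∃ u : H, ∃ σ : ℕ → ℕ, StrictMono σ ∧ ∀ τ : ℕ → ℕ, StrictMono τ →
      Tendsto (fun n : ℕ => ‖(n : ℝ)⁻¹ • (∑ k ∈ Finset.range n, x (σ (τ k))) - u‖)
        atTop (𝓝 0) := by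
  obtain ⟨u, hu⟩ := hilbert_weak x C hC
  obtain ⟨σ, -, hσ⟩ := exists_seq_of_forall_finset_exists (α := ℕ) (fun _ => True)
    (fun a b => a < b ∧ |inner ℝ (x b - u) (x a - u)| ≤ (1 / 2 : ℝ) ^ a) (by
    intro s _
    have h1 : ∀ a ∈ s, ∀ᶠ b in (hyperfilter ℕ : Filter ℕ),
        a < b ∧ |inner ℝ (x b - u) (x a - u)| ≤ (1 / 2 : ℝ) ^ a := by
      intro a _
      have h2 : ∀ᶠ b in (hyperfilter ℕ : Filter ℕ), a < b := by
        have : (hyperfilter ℕ : Filter ℕ) ≤ atTop := by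
          rw [← Nat.cofinite_eq_atTop]; exact hyperfilter_le_cofinite
        exact this (eventually_gt_atTop a)
      have h3 := (hu (x a - u)).abs
      rw [abs_zero] at h3
      exact h2.and (h3.eventually_le_const (by positivity))
    obtain ⟨b, hb⟩ := ((Filter.eventually_all_finset s).2 h1).exists
    exact ⟨b, trivial, hb⟩)
  have hσm : StrictMono σ := fun a b hab => (hσ a b hab).1
  refine ⟨u, σ, hσm, fun τ hτ => ?_⟩
  set y : ℕ → H := fun k => x (σ (τ k)) - u with hy
  have hyi : ∀ i j, i < j → |inner ℝ (y j) (y i)| ≤ (1 / 2 : ℝ) ^ i := by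
    intro i j hij
    refine (hσ _ _ (hτ hij)).2.trans ?_
    exact pow_le_pow_of_le_one (by norm_num) (by norm_num)
      ((hτ.id_le i).trans (hσm.id_le _))
  have hyC : ∀ k, ‖y k‖ ≤ C + ‖u‖ := fun k => (norm_sub_le _ _).trans (by gcongr; exact hC _)
  set K : ℝ := (C + ‖u‖) ^ 2 + 4 with hK
  have hS : ∀ n : ℕ, ‖∑ k ∈ Finset.range n, y k‖ ^ 2 ≤ n * K := by
    intro n
    induction n with
    | zero => simp
    | succ n ih =>
      rw [Finset.sum_range_succ, norm_add_sq_real]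
      have h1 : inner ℝ (∑ k ∈ Finset.range n, y k) (y n) ≤ 2 := by
        rw [sum_inner]
        calc ∑ i ∈ Finset.range n, inner ℝ (y i) (y n) ≤ ∑ i ∈ Finset.range n, (1 / 2 : ℝ) ^ i := by
              refine Finset.sum_le_sum fun i hi => ?_
              rw [real_inner_comm]
              exact (le_abs_self _).trans (hyi i n (Finset.mem_range.1 hi))
          _ ≤ ∑' i : ℕ, (1 / 2 : ℝ) ^ i :=
              summable_geometric_two.sum_le_tsum _ (fun i _ => by positivity)
          _ = 2 := tsum_geometric_two
      have h2 : ‖y n‖ ^ 2 ≤ (C + ‖u‖) ^ 2 := pow_le_pow_left₀ (norm_nonneg _) (hyC n) 2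
      push_cast
      nlinarith
  have hlim : Tendsto (fun n : ℕ => Real.sqrt (K / n)) atTop (𝓝 0) := by
    have := (tendsto_const_div_atTop_nhds_zero_nat K).sqrt
    simpa using this
  refine squeeze_zero' (Eventually.of_forall fun n => norm_nonneg _) ?_ hlim
  filter_upwards [eventually_gt_atTop 0] with n hn
  have hn' : (0 : ℝ) < n := by exact_mod_cast hn
  have e : (n : ℝ)⁻¹ • (∑ k ∈ Finset.range n, x (σ (τ k))) - u
      = (n : ℝ)⁻¹ • ∑ k ∈ Finset.range n, y k := by
    simp only [hy, Finset.sum_sub_distrib, Finset.sum_const, Finset.card_range, smul_sub]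
    rw [← Nat.cast_smul_eq_nsmul ℝ, smul_smul, inv_mul_cancel₀ hn'.ne', one_smul]
  rw [e, norm_smul, norm_inv, Real.norm_natCast]
  apply Real.le_sqrt_of_sq_le
  rw [mul_pow, inv_pow, div_eq_mul_inv]
  have := hS n
  calc ((n : ℝ) ^ 2)⁻¹ * ‖∑ k ∈ Finset.range n, y k‖ ^ 2 ≤ ((n : ℝ) ^ 2)⁻¹ * (n * K) := by gcongr
    _ = K * (n : ℝ)⁻¹ := by field_simp

lemma L1_le_L2 {Ω : Type*} [MeasurableSpace Ω] (η : Measure Ω) [IsFiniteMeasure η]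
    (F : Lp ℝ 2 η) : ∫ ω, |F ω| ∂η ≤ ((η Set.univ) ^ (1 / 2 : ℝ)).toReal * ‖F‖ := by
  have h := eLpNorm_le_eLpNorm_mul_rpow_measure_univ (p := 1) (q := 2) (μ := η) (by norm_num)
    (Lp.aestronglyMeasurable F)
  rw [eLpNorm_one_eq_lintegral_enorm] at h
  have e : ∫ ω, |F ω| ∂η = (∫⁻ ω, ‖F ω‖ₑ ∂η).toReal :=
    integral_norm_eq_lintegral_enorm (Lp.aestronglyMeasurable F)
  rw [e, Lp.norm_def, mul_comm, ← ENNReal.toReal_mul]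
  refine ENNReal.toReal_mono ?_ (h.trans ?_)
  · exact ENNReal.mul_ne_top (Lp.eLpNorm_ne_top F) (by simp)
  · rw [show (1 / ENNReal.toReal 1 - 1 / ENNReal.toReal 2 : ℝ) = 1 / 2 by norm_num]

lemma L1_BS {Ω : Type*} [MeasurableSpace Ω] (η : Measure Ω) [IsFiniteMeasure η]
    (g : ℕ → Ω → ℝ) (hm : ∀ n, Measurable (g n)) (hi : ∀ n, Integrable (g n) η)
    (hui : ∀ ε : ℝ, 0 < ε → ∃ M : ℕ, ∀ n,
      ∫ ω, |({ω | (M : ℝ) < |g n ω|}).indicator (g n) ω| ∂η ≤ ε)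
    (hw : ∀ ψ : Ω → ℝ, Measurable ψ → (∀ ω, |ψ ω| ≤ 1) →
      Tendsto (fun n => ∫ ω, ψ ω * g n ω ∂η) atTop (𝓝 0)) :
    ∃ σ : ℕ → ℕ, StrictMono σ ∧ ∀ τ : ℕ → ℕ, StrictMono τ →
      Tendsto (fun n : ℕ => ∫ ω, |((n : ℝ)⁻¹ • ∑ k ∈ Finset.range n, g (σ (τ k))) ω| ∂η)
        atTop (𝓝 0) := by
  set t : ℕ → ℕ → Ω → ℝ := fun n M => ({ω | (M : ℝ) < |g n ω|}ᶜ).indicator (g n) with ht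
  have hset : ∀ n (M : ℕ), MeasurableSet {ω | (M : ℝ) < |g n ω|} := fun n M =>
    measurableSet_lt measurable_const (hm n).abs
  have htm : ∀ n M, Measurable (t n M) := fun n M => (hm n).indicator (hset n M).compl
  have htb : ∀ n (M : ℕ) ω, |t n M ω| ≤ M := by
    intro n M ω
    simp only [ht, Set.indicator_apply, Set.mem_compl_iff, Set.mem_ofPred_eq, not_lt]
    split_ifs with h
    · exact h
    · simp
  have htL : ∀ n M, MemLp (t n M) 2 η := fun n M =>
    MemLp.of_bound (htm n M).aestronglyMeasurable M (Eventually.of_forall (htb n M))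
  set T : ℕ → ℕ → Lp ℝ 2 η := fun n M => (htL n M).toLp with hT
  obtain ⟨K, hK0, hK⟩ : ∃ K : ℝ, 0 ≤ K ∧ ∀ n M, ‖T n M‖ ≤ K * M := by
    refine ⟨_, ?_, fun n M => Lp.norm_le_of_ae_bound (C := (M : ℝ)) (by positivity) ?_⟩
    · positivity
    · filter_upwards [(htL n M).coeFn_toLp] with ω hω
      rw [hω]; exact htb n M ω
  set c : ℕ → ℝ := fun M => (1 / 2 : ℝ) ^ M / (M + 1) with hc
  have hc0 : ∀ M, 0 < c M := fun M => by positivity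
  have hcT : ∀ n M, ‖c M • T n M‖ ≤ K * (1 / 2 : ℝ) ^ M := by
    intro n M
    rw [norm_smul, Real.norm_of_nonneg (hc0 M).le]
    calc c M * ‖T n M‖ ≤ c M * (K * M) := by exact mul_le_mul_of_nonneg_left (hK n M) (hc0 M).le
      _ = K * (1 / 2 : ℝ) ^ M * (M / (M + 1)) := by simp only [hc]; ring
      _ ≤ K * (1 / 2 : ℝ) ^ M * 1 := by
        gcongr
        rw [div_le_one (by positivity)]; linarith
      _ = _ := mul_one _
  have hsq : ∀ n M, ‖c M • T n M‖ ^ (2 : ℝ≥0∞).toReal ≤ K ^ 2 * (1 / 4 : ℝ) ^ M := by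
    intro n M
    have : (2 : ℝ≥0∞).toReal = ((2 : ℕ) : ℝ) := by simp
    rw [this, Real.rpow_natCast]
    calc ‖c M • T n M‖ ^ 2 ≤ (K * (1 / 2 : ℝ) ^ M) ^ 2 :=
          pow_le_pow_left₀ (norm_nonneg _) (hcT n M) 2
      _ = _ := by rw [mul_pow, ← pow_mul, mul_comm M 2, pow_mul]; norm_num
  have hsum : Summable (fun M : ℕ => K ^ 2 * (1 / 4 : ℝ) ^ M) :=
    (summable_geometric_of_lt_one (by norm_num) (by norm_num)).mul_left _
  have hmem : ∀ n, Memℓp (fun M => c M • T n M) 2 := by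
    intro n
    refine memℓp_gen (Summable.of_nonneg_of_le (fun M => by positivity) (hsq n) hsum)
  let x : ℕ → lp (fun _ : ℕ => Lp ℝ 2 η) 2 := fun n => ⟨fun M => c M • T n M, hmem n⟩
  set Q : ℝ := ∑' M : ℕ, K ^ 2 * (1 / 4 : ℝ) ^ M with hQ
  have hQ0 : 0 ≤ Q := tsum_nonneg fun M => by positivity
  have hxb : ∀ n, ‖x n‖ ≤ Real.sqrt Q := by
    intro n
    refine lp.norm_le_of_tsum_le (by norm_num) (Real.sqrt_nonneg _) ?_
    have : (2 : ℝ≥0∞).toReal = ((2 : ℕ) : ℝ) := by simp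
    rw [show Real.sqrt Q ^ (2 : ℝ≥0∞).toReal = Q by
      rw [this, Real.rpow_natCast, Real.sq_sqrt hQ0]]
    exact Summable.tsum_le_tsum (hsq n)
      (Summable.of_nonneg_of_le (fun M => by positivity) (hsq n) hsum) hsum
  obtain ⟨u, σ, hσ, hcv⟩ := hilbert_BS x _ hxb
  refine ⟨σ, hσ, fun τ hτ => ?_⟩
  -- components
  have hcomp : ∀ M, Tendsto (fun n : ℕ =>
      ‖(n : ℝ)⁻¹ • (∑ k ∈ Finset.range n, T (σ (τ k)) M) - (c M)⁻¹ • u M‖) atTop (𝓝 0) := by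
    intro M
    have h0 := (hcv τ hτ).const_mul (c M)⁻¹
    rw [mul_zero] at h0
    refine squeeze_zero (fun n => norm_nonneg _) (fun n => ?_) h0
    have h1 := lp.norm_apply_le_norm (p := 2) (by norm_num)
      ((n : ℝ)⁻¹ • (∑ k ∈ Finset.range n, x (σ (τ k))) - u) M
    have e : ((n : ℝ)⁻¹ • (∑ k ∈ Finset.range n, x (σ (τ k))) - u) M
        = c M • ((n : ℝ)⁻¹ • (∑ k ∈ Finset.range n, T (σ (τ k)) M) - (c M)⁻¹ • u M) := by
      have e1 : (∑ k ∈ Finset.range n, x (σ (τ k)) : lp (fun _ : ℕ => Lp ℝ 2 η) 2) M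
          = ∑ k ∈ Finset.range n, c M • T (σ (τ k)) M := by
        rw [lp.coeFn_sum, Finset.sum_apply]
      have e2 : (c M) • (c M)⁻¹ • u M = u M := by
        rw [smul_smul, mul_inv_cancel₀ (hc0 M).ne', one_smul]
      have e3 : ((n : ℝ)⁻¹ • (∑ k ∈ Finset.range n, x (σ (τ k))) - u) M
        = (n : ℝ)⁻¹ • ((∑ k ∈ Finset.range n, x (σ (τ k)) : lp (fun _ : ℕ => Lp ℝ 2 η) 2) M)
          - u M := rfl
      rw [e3, e1, smul_sub, e2, ← Finset.smul_sum, smul_comm]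
    rw [e, norm_smul, Real.norm_of_nonneg (hc0 M).le] at h1
    rw [← div_eq_inv_mul, le_div_iff₀ (hc0 M), mul_comm]
    exact h1
  rw [Metric.tendsto_atTop]
  intro ε hε
  obtain ⟨M, hM⟩ := hui (ε / 6) (by positivity)
  set V : Lp ℝ 2 η := (c M)⁻¹ • u M with hV
  have hVm : Measurable (V : Ω → ℝ) := (Lp.stronglyMeasurable V).measurable
  have hVi : Integrable (V : Ω → ℝ) η := (Lp.memLp V).integrable (by norm_num)
  set ψ : Ω → ℝ := fun ω => if 0 ≤ V ω then 1 else -1 with hψ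
  have hψm : Measurable ψ := Measurable.ite (measurableSet_le measurable_const hVm)
    measurable_const measurable_const
  have hψb : ∀ ω, |ψ ω| ≤ 1 := by
    intro ω; simp only [hψ]; split_ifs <;> simp
  have hψV : ∀ ω, ψ ω * V ω = |V ω| := by
    intro ω; simp only [hψ]; split_ifs with h
    · rw [abs_of_nonneg h, one_mul]
    · rw [abs_of_neg (not_le.1 h)]; ring
  set ρ : ℕ → ℕ := fun k => σ (τ k) with hρ
  have hρm : StrictMono ρ := hσ.comp hτ
  set a : ℕ → Ω → ℝ := fun n => (n : ℝ)⁻¹ • ∑ k ∈ Finset.range n, g (ρ k) with ha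
  set b : ℕ → Ω → ℝ := fun n => (n : ℝ)⁻¹ • ∑ k ∈ Finset.range n, t (ρ k) M with hb
  set r : ℕ → Ω → ℝ := fun n => (n : ℝ)⁻¹ • ∑ k ∈ Finset.range n,
    ({ω | (M : ℝ) < |g (ρ k) ω|}).indicator (g (ρ k)) with hr
  have hti : ∀ k, Integrable (t k M) η := fun k => (hi k).indicator (hset k M).compl
  have hri : ∀ k, Integrable (({ω | (M : ℝ) < |g k ω|}).indicator (g k)) η :=
    fun k => (hi k).indicator (hset k M)
  have hai : ∀ n, Integrable (a n) η := fun n => (integrable_finsetSum' _ fun k _ => hi _).smul _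
  have hbi : ∀ n, Integrable (b n) η := fun n => (integrable_finsetSum' _ fun k _ => hti _).smul _
  have hrri : ∀ n, Integrable (r n) η := fun n => (integrable_finsetSum' _ fun k _ => hri _).smul _
  have habr : ∀ n, a n = r n + b n := by
    intro n
    simp only [ha, hb, hr, ht]
    rw [← smul_add, ← Finset.sum_add_distrib]
    simp only [Set.indicator_self_add_compl]
  have hr1 : ∀ n, ∫ ω, |r n ω| ∂η ≤ ε / 6 := by
    intro n
    rcases Nat.eq_zero_or_pos n with h0 | h0
    · subst h0; simp [hr]; positivity
    have hn' : (0 : ℝ) < n := by exact_mod_cast h0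
    calc ∫ ω, |r n ω| ∂η ≤ ∫ ω, (n : ℝ)⁻¹ * ∑ k ∈ Finset.range n,
          |({ω | (M : ℝ) < |g (ρ k) ω|}).indicator (g (ρ k)) ω| ∂η := by
          refine integral_mono (hrri n).abs
            ((integrable_finsetSum _ fun k _ => (hri _).abs).const_mul _) fun ω => ?_
          simp only [hr, Pi.smul_apply, Finset.sum_apply, smul_eq_mul, abs_mul, abs_inv,
            Nat.abs_cast]
          gcongr
          exact Finset.abs_sum_le_sum_abs _ _
      _ = (n : ℝ)⁻¹ * ∑ k ∈ Finset.range n,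
          ∫ ω, |({ω | (M : ℝ) < |g (ρ k) ω|}).indicator (g (ρ k)) ω| ∂η := by
          rw [integral_const_mul, integral_finsetSum _ fun k _ => (hri _).abs]
      _ ≤ (n : ℝ)⁻¹ * ∑ k ∈ Finset.range n, ε / 6 := by
          gcongr with k hk
          exact hM _
      _ = ε / 6 := by
          rw [Finset.sum_const, Finset.card_range, nsmul_eq_mul]; field_simp
  -- L1 convergence of b n to V
  have hbV : Tendsto (fun n => ∫ ω, |b n ω - V ω| ∂η) atTop (𝓝 0) := by
    have h0 := (hcomp M).const_mul ((η Set.univ) ^ (1 / 2 : ℝ)).toReal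
    rw [mul_zero] at h0
    refine squeeze_zero (fun n => integral_nonneg fun ω => abs_nonneg _) (fun n => ?_) h0
    refine le_trans (le_of_eq ?_) (L1_le_L2 η _)
    refine integral_congr_ae ?_
    have hs : ((∑ k ∈ Finset.range n, T (ρ k) M : Lp ℝ 2 η) : Ω → ℝ)
        =ᵐ[η] ∑ k ∈ Finset.range n, t (ρ k) M := by
      have h3 : ∀ s : Finset ℕ, ((∑ k ∈ s, T (ρ k) M : Lp ℝ 2 η) : Ω → ℝ)
          =ᵐ[η] ∑ k ∈ s, t (ρ k) M := by
        intro s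
        induction s using Finset.induction_on with
        | empty => simpa using Lp.coeFn_zero ℝ 2 η
        | insert i s his ih =>
          rw [Finset.sum_insert his, Finset.sum_insert his]
          exact (Lp.coeFn_add _ _).trans (((htL (ρ i) M).coeFn_toLp).add ih)
      exact h3 _
    filter_upwards [Lp.coeFn_sub ((n : ℝ)⁻¹ • (∑ k ∈ Finset.range n, T (ρ k) M)) V,
      Lp.coeFn_smul (n : ℝ)⁻¹ (∑ k ∈ Finset.range n, T (ρ k) M), hs] with ω h1 h2 h3
    rw [h1, Pi.sub_apply, h2, Pi.smul_apply, h3]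
    rfl
  have hψa : Tendsto (fun n => |∫ ω, ψ ω * a n ω ∂η|) atTop (𝓝 0) := by
    have h1 := ((hw ψ hψm hψb).comp hρm.tendsto_atTop).cesaro
    have h2 := h1.abs
    rw [abs_zero] at h2
    refine h2.congr fun n => ?_
    congr 1
    have e : ∀ ω, ψ ω * a n ω = (n : ℝ)⁻¹ * ∑ k ∈ Finset.range n, ψ ω * g (ρ k) ω := by
      intro ω
      simp only [ha, Pi.smul_apply, Finset.sum_apply, smul_eq_mul, ← Finset.mul_sum]
      ring
    simp only [e]
    rw [integral_const_mul, integral_finsetSum]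
    · rfl
    · intro k _
      exact (hi _).bdd_mul hψm.aestronglyMeasurable (c := 1) (Eventually.of_forall hψb)
  have hev := ((hψa.add (hbV.const_mul 2)).eventually_lt_const
    (show (0 : ℝ) + 2 * 0 < ε / 6 by linarith))
  obtain ⟨N, hN⟩ := eventually_atTop.1 hev
  refine ⟨N, fun n hn => ?_⟩
  have hlt := hN n hn
  rw [Real.dist_eq, sub_zero, abs_of_nonneg (integral_nonneg fun ω => abs_nonneg _)]
  change ∫ ω, |a n ω| ∂η < ε
  have hmul : ∀ F : Ω → ℝ, Integrable F η → Integrable (fun ω => ψ ω * F ω) η := fun F hF =>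
    hF.bdd_mul hψm.aestronglyMeasurable (c := 1) (Eventually.of_forall hψb)
  have hmb : ∀ F : Ω → ℝ, Integrable F η → |∫ ω, ψ ω * F ω ∂η| ≤ ∫ ω, |F ω| ∂η := by
    intro F hF
    refine (abs_integral_le_integral_abs).trans (integral_mono (hmul F hF).abs hF.abs fun ω => ?_)
    simp only [abs_mul]
    exact mul_le_of_le_one_left (abs_nonneg _) (hψb ω)
  have hbVi : Integrable (fun ω => b n ω - V ω) η := (hbi n).sub hVi
  have hV1 : ∫ ω, |V ω| ∂η = ∫ ω, ψ ω * a n ω ∂η - ∫ ω, ψ ω * r n ω ∂η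
      - ∫ ω, ψ ω * (b n ω - V ω) ∂η := by
    have i1 : Integrable (fun ω => ψ ω * a n ω - ψ ω * r n ω) η :=
      (hmul _ (hai n)).sub (hmul _ (hrri n))
    rw [← integral_sub (hmul _ (hai n)) (hmul _ (hrri n)), ← integral_sub i1 (hmul _ hbVi)]
    congr 1; ext ω
    rw [← hψV, habr, Pi.add_apply]
    ring
  have hA : ∫ ω, |a n ω| ∂η ≤ ∫ ω, |r n ω| ∂η + ∫ ω, |b n ω - V ω| ∂η + ∫ ω, |V ω| ∂η := by
    have i1 : Integrable (fun ω => |r n ω| + |b n ω - V ω|) η := (hrri n).abs.add hbVi.abs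
    rw [← integral_add (hrri n).abs hbVi.abs, ← integral_add i1 hVi.abs]
    refine integral_mono (hai n).abs (i1.add hVi.abs) fun ω => ?_
    simp only [habr, Pi.add_apply]
    have := abs_add_three (r n ω) (b n ω - V ω) (V ω)
    rwa [show r n ω + (b n ω - V ω) + V ω = r n ω + b n ω by ring] at this
  have h1 := le_abs_self (∫ ω, ψ ω * a n ω ∂η)
  have h2 := (abs_le.1 (hmb _ (hrri n))).1
  have h3 := (abs_le.1 (hmb _ hbVi)).1
  have h4 := hr1 n
  linarith


lemma dualApply_apply (m : VectorMeasure Ω X) (x : X →L[ℝ] ℝ) (A : Set Ω) :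
    dualApply m x A = x (m A) := rfl

instance finTV (s : SignedMeasure Ω) : IsFiniteMeasure s.totalVariation := by
  unfold SignedMeasure.totalVariation; infer_instance

lemma integral_tv (s : SignedMeasure Ω) {f : Ω → ℝ} (hf : Integrable f s.totalVariation) :
    ∫ ω, f ω ∂s.totalVariation = ∫ ω, f ω ∂s.toJordanDecomposition.posPart
      + ∫ ω, f ω ∂s.toJordanDecomposition.negPart := by
  unfold SignedMeasure.totalVariation at hf ⊢
  exact integral_add_measure hf.left_of_add_measure hf.right_of_add_measure

lemma int_pos {s : SignedMeasure Ω} {f : Ω → ℝ} (hf : Integrable f s.totalVariation) :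
    Integrable f s.toJordanDecomposition.posPart := hf.left_of_add_measure

lemma int_neg {s : SignedMeasure Ω} {f : Ω → ℝ} (hf : Integrable f s.totalVariation) :
    Integrable f s.toJordanDecomposition.negPart := hf.right_of_add_measure

lemma sIntegral_add (s : SignedMeasure Ω) {f g : Ω → ℝ} (hf : Integrable f s.totalVariation)
    (hg : Integrable g s.totalVariation) (A : Set Ω) :
    sIntegral s (f + g) A = sIntegral s f A + sIntegral s g A := by
  unfold sIntegral
  simp only [Pi.add_apply]
  rw [integral_add (int_pos hf).integrableOn (int_pos hg).integrableOn,
    integral_add (int_neg hf).integrableOn (int_neg hg).integrableOn]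
  ring

lemma sIntegral_smul (s : SignedMeasure Ω) (c : ℝ) (f : Ω → ℝ) (A : Set Ω) :
    sIntegral s (c • f) A = c * sIntegral s f A := by
  unfold sIntegral
  simp only [Pi.smul_apply, smul_eq_mul]
  rw [integral_const_mul, integral_const_mul]
  ring

lemma sIntegral_indicator (s : SignedMeasure Ω) (f : Ω → ℝ) (A : Set Ω) {Q : Set Ω}
    (hQ : MeasurableSet Q) :
    sIntegral s (Q.indicator f) A = sIntegral s f (A ∩ Q) := by
  unfold sIntegral
  rw [setIntegral_indicator hQ, setIntegral_indicator hQ]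

lemma abs_sIntegral_le (s : SignedMeasure Ω) {f : Ω → ℝ} (hf : Integrable f s.totalVariation) :
    |sIntegral s f Set.univ| ≤ ∫ ω, |f ω| ∂s.totalVariation := by
  rw [integral_tv s hf.abs]
  unfold sIntegral
  simp only [Measure.restrict_univ]
  refine (abs_sub _ _).trans (add_le_add ?_ ?_) <;> exact abs_integral_le_integral_abs

lemma MIntegrable.add {m : VectorMeasure Ω X} {f g : Ω → ℝ} (hf : MIntegrable m f)
    (hg : MIntegrable m g) : MIntegrable m (f + g) := by
  refine ⟨hf.1.add hg.1, fun x => (hf.2.1 x).add (hg.2.1 x), fun A hA => ?_⟩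
  obtain ⟨v, hv⟩ := hf.2.2 A hA
  obtain ⟨w, hw⟩ := hg.2.2 A hA
  exact ⟨v + w, fun x => by
    rw [map_add, hv, hw, sIntegral_add _ (hf.2.1 x) (hg.2.1 x)]⟩

lemma MIntegrable.smul {m : VectorMeasure Ω X} {f : Ω → ℝ} (c : ℝ) (hf : MIntegrable m f) :
    MIntegrable m (c • f) := by
  refine ⟨hf.1.const_smul c, fun x => (hf.2.1 x).smul c, fun A hA => ?_⟩
  obtain ⟨v, hv⟩ := hf.2.2 A hA
  exact ⟨c • v, fun x => by rw [map_smul, hv, sIntegral_smul, smul_eq_mul]⟩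

lemma MIntegrable.indicator {m : VectorMeasure Ω X} {f : Ω → ℝ} (hf : MIntegrable m f)
    {Q : Set Ω} (hQ : MeasurableSet Q) : MIntegrable m (Q.indicator f) := by
  refine ⟨hf.1.indicator hQ, fun x => (hf.2.1 x).indicator hQ, fun A hA => ?_⟩
  obtain ⟨v, hv⟩ := hf.2.2 (A ∩ Q) (hA.inter hQ)
  exact ⟨v, fun x => by rw [hv, sIntegral_indicator _ _ _ hQ]⟩

lemma MIntegrable.abs {m : VectorMeasure Ω X} {f : Ω → ℝ} (hf : MIntegrable m f) :
    MIntegrable m (fun ω => |f ω|) := by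
  have hQ : MeasurableSet {ω | 0 ≤ f ω} := measurableSet_le measurable_const hf.1
  have e : (fun ω => |f ω|) = ({ω | 0 ≤ f ω}).indicator f
      + (-1 : ℝ) • ({ω | 0 ≤ f ω}ᶜ).indicator f := by
    ext ω
    by_cases h : 0 ≤ f ω
    · simp [h, abs_of_nonneg h]
    · simp [h, abs_of_neg (not_le.1 h)]
  rw [e]
  exact (hf.indicator hQ).add ((hf.indicator hQ.compl).smul _)

lemma MIntegrable.one (m : VectorMeasure Ω X) : MIntegrable m (fun _ => (1 : ℝ)) := by
  refine ⟨measurable_const, fun x => integrable_const _, fun A hA => ⟨m A, fun x => ?_⟩⟩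
  rw [← dualApply_apply, SignedMeasure.apply_eq_posPart_real_sub_negPart_real _ hA]
  simp [sIntegral]

lemma MIntegrable.zero (m : VectorMeasure Ω X) : MIntegrable m (0 : Ω → ℝ) := by
  have := (MIntegrable.one m).smul 0
  simpa using this

lemma MIntegrable.sum {m : VectorMeasure Ω X} {f : ℕ → Ω → ℝ} (hf : ∀ k, MIntegrable m (f k))
    (s : Finset ℕ) : MIntegrable m (∑ k ∈ s, f k) := by
  induction s using Finset.induction_on with
  | empty => simpa using MIntegrable.zero m
  | insert i s his ih => rw [Finset.sum_insert his]; exact (hf i).add ih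

lemma cone_closed {S : Type*} [MeasurableSpace S] {μ : Measure S} (B : BFS S μ X) :
    IsClosed {x : X | ∀ᵐ s ∂μ, 0 ≤ B.J x s} := by
  refine isClosed_of_closure_subset fun x hx => ?_
  rw [Metric.mem_closure_iff] at hx
  set g : S → ℝ := fun s => max (-(B.J x s)) 0 with hg
  have hgm : AEMeasurable g μ := (B.aemeasurable x).neg.max aemeasurable_const
  have key : ∀ ε : ℝ, 0 < ε → ∃ y : X, B.J y =ᵐ[μ] g ∧ ‖y‖ < ε := by
    intro ε hε
    obtain ⟨b, hb, hd⟩ := hx ε hε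
    obtain ⟨y, hy, hyn⟩ := B.ideal (x - b) g hgm (by
      have hb' : ∀ᵐ s ∂μ, 0 ≤ B.J b s := hb
      filter_upwards [hb'] with s hs
      rw [map_sub, Pi.sub_apply, hg]
      simp only
      rw [abs_of_nonneg (le_max_right _ _)]
      refine max_le ?_ (abs_nonneg _)
      have := neg_abs_le (B.J x s - B.J b s)
      linarith)
    exact ⟨y, hy, hyn.trans_lt (by rwa [dist_eq_norm] at hd)⟩
  obtain ⟨y, hy, -⟩ := key 1 one_pos
  have hy0 : y = 0 := by
    rw [← norm_eq_zero]
    refine le_antisymm (le_of_forall_pos_le_add fun ε hε => ?_) (norm_nonneg _)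
    obtain ⟨z, hz, hzn⟩ := key ε hε
    have : y - z = 0 := B.eq_zero _ (by
      filter_upwards [hy, hz] with s h1 h2
      rw [map_sub, Pi.sub_apply, h1, h2, sub_self]; rfl)
    rw [sub_eq_zero.1 this]; linarith
  rw [hy0, map_zero] at hy
  change ∀ᵐ s ∂μ, 0 ≤ B.J x s
  filter_upwards [hy] with s hs
  have h1 : (0 : ℝ) = max (-(B.J x s)) 0 := hs
  have := le_max_left (-(B.J x s)) 0
  linarith

lemma cone_dual {S : Type*} [MeasurableSpace S] {μ : Measure S} (B : BFS S μ X) (v : X)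
    (hv : ∀ x : X →L[ℝ] ℝ, (∀ w : X, (∀ᵐ s ∂μ, 0 ≤ B.J w s) → 0 ≤ x w) → 0 ≤ x v) :
    ∀ᵐ s ∂μ, 0 ≤ B.J v s := by
  by_contra hcon
  have hconv : Convex ℝ {x : X | ∀ᵐ s ∂μ, 0 ≤ B.J x s} := by
    intro x hx y hy a b ha hb _
    have hx' : ∀ᵐ s ∂μ, 0 ≤ B.J x s := hx
    have hy' : ∀ᵐ s ∂μ, 0 ≤ B.J y s := hy
    change ∀ᵐ s ∂μ, 0 ≤ B.J (a • x + b • y) s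
    filter_upwards [hx', hy'] with s h1 h2
    simp only [map_add, map_smul, Pi.add_apply, Pi.smul_apply, smul_eq_mul]
    positivity
  obtain ⟨f, u, h1, h2⟩ := geometric_hahn_banach_point_closed hconv (cone_closed B) hcon
  have hu : u < 0 := by
    have := h2 0 (by
      change ∀ᵐ s ∂μ, 0 ≤ B.J 0 s
      simp)
    simpa using this
  have h3 := hv f (by
    intro w hw
    by_contra hneg
    push Not at hneg
    have h4 := h2 ((u / f w) • w) (by
      change ∀ᵐ s ∂μ, 0 ≤ B.J ((u / f w) • w) s
      filter_upwards [hw] with s hs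
      simp only [map_smul, Pi.smul_apply, smul_eq_mul]
      exact mul_nonneg (div_nonneg_of_nonpos hu.le hneg.le) hs)
    rw [map_smul, smul_eq_mul, div_mul_cancel₀ _ hneg.ne] at h4
    exact lt_irrefl _ h4)
  linarith

lemma neg_zero_of_nonneg (s : SignedMeasure Ω) (hs : ∀ A, MeasurableSet A → 0 ≤ s A) :
    s.toJordanDecomposition.negPart = 0 := by
  obtain ⟨P, hP, hP1, hP2⟩ := s.toJordanDecomposition.mutuallySingular
  have h := hs P hP
  rw [SignedMeasure.apply_eq_posPart_real_sub_negPart_real _ hP, measureReal_def,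
    measureReal_def, hP1] at h
  have h1 : (s.toJordanDecomposition.negPart P).toReal = 0 :=
    le_antisymm (by simpa using h) ENNReal.toReal_nonneg
  have h2 : s.toJordanDecomposition.negPart P = 0 := by
    rcases (ENNReal.toReal_eq_zero_iff _).1 h1 with h | h
    · exact h
    · exact absurd h (measure_ne_top _ _)
  rw [← Measure.measure_univ_eq_zero, ← Set.union_compl_self P]
  exact measure_union_null h2 hP2

lemma integral_cone {S : Type*} [MeasurableSpace S] {μ : Measure S} (B : BFS S μ X)
    (m : VectorMeasure Ω X)
    (hpos : ∀ A : Set Ω, MeasurableSet A → ∀ᵐ s ∂μ, 0 ≤ B.J (m A) s)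
    {F : Ω → ℝ} (hF0 : ∀ ω, 0 ≤ F ω) (A : Set Ω) (v : X)
    (hv : ∀ x : X →L[ℝ] ℝ, x v = sIntegral (dualApply m x) F A) :
    ∀ᵐ s ∂μ, 0 ≤ B.J v s := by
  refine cone_dual B v fun x hx => ?_
  rw [hv, sIntegral, neg_zero_of_nonneg (dualApply m x) fun A hA => hx _ (hpos A hA)]
  simp only [Measure.restrict_zero, integral_zero_measure, sub_zero]
  exact integral_nonneg hF0

lemma key_bound {S : Type*} [MeasurableSpace S] {μ : Measure S} (B : BFS S μ X)
    (m : VectorMeasure Ω X)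
    (hpos : ∀ A : Set Ω, MeasurableSet A → ∀ᵐ s ∂μ, 0 ≤ B.J (m A) s)
    {F : Ω → ℝ} (hF : MIntegrable m F) (hF0 : ∀ ω, 0 ≤ F ω) (v : X)
    (hv : ∀ x : X →L[ℝ] ℝ, x v = sIntegral (dualApply m x) F Set.univ)
    (x : X →L[ℝ] ℝ) (hx : ‖x‖ ≤ 1) :
    ∫ ω, F ω ∂(dualApply m x).totalVariation ≤ ‖v‖ := by
  obtain ⟨P, hP, hP1, hP2⟩ := (dualApply m x).toJordanDecomposition.mutuallySingular
  obtain ⟨a, ha⟩ := hF.2.2 P hP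
  obtain ⟨b, hb⟩ := hF.2.2 Pᶜ hP.compl
  have ha0 := integral_cone B m hpos hF0 P a ha
  have hb0 := integral_cone B m hpos hF0 Pᶜ b hb
  have hvab : v = a + b := by
    refine (SeparatingDual.eq_iff_forall_dual_eq (R := ℝ)).2 fun y => ?_
    rw [map_add, hv, ha, hb]
    have h1 := integral_add_compl hP (int_pos (hF.2.1 y))
    have h2 := integral_add_compl hP (int_neg (hF.2.1 y))
    simp only [sIntegral, Measure.restrict_univ]
    linarith
  obtain ⟨y, hy, hyn⟩ := B.ideal v (B.J (b - a)) (B.aemeasurable _) (by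
    filter_upwards [ha0, hb0] with s h1 h2
    simp only [hvab, map_add, map_sub, Pi.add_apply, Pi.sub_apply]
    rw [abs_of_nonneg (add_nonneg h1 h2), abs_le]
    constructor <;> linarith)
  have hyb : y = b - a := by
    refine sub_eq_zero.1 (B.eq_zero _ ?_)
    filter_upwards [hy] with s hs
    rw [map_sub, Pi.sub_apply, hs, sub_self]; rfl
  have e : ∫ ω, F ω ∂(dualApply m x).totalVariation = x (b - a) := by
    rw [integral_tv _ (hF.2.1 x), map_sub, ha, hb]
    have h1 := integral_add_compl hP (int_pos (hF.2.1 x))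
    have h2 := integral_add_compl hP (int_neg (hF.2.1 x))
    have h3 := setIntegral_measure_zero F hP1
    have h4 := setIntegral_measure_zero F hP2
    simp only [sIntegral]
    linarith
  rw [e, ← hyb]
  calc x y ≤ ‖x y‖ := le_abs_self _
    _ ≤ ‖x‖ * ‖y‖ := x.le_opNorm y
    _ ≤ 1 * ‖v‖ := by gcongr
    _ = ‖v‖ := one_mul _

/-- boundedness of the family defining the norm -/
def MBdd (m : VectorMeasure Ω X) : Prop := ∀ f : Ω → ℝ, MIntegrable m f →
  ∃ C : ℝ, ∀ x : X →L[ℝ] ℝ, ‖x‖ ≤ 1 → ∫ ω, |f ω| ∂(dualApply m x).totalVariation ≤ C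

lemma mNorm_le {m : VectorMeasure Ω X} {f : Ω → ℝ} {C : ℝ}
    (h : ∀ x : X →L[ℝ] ℝ, ‖x‖ ≤ 1 → ∫ ω, |f ω| ∂(dualApply m x).totalVariation ≤ C) :
    mNorm m f ≤ C := by
  haveI : Nonempty {x : X →L[ℝ] ℝ // ‖x‖ ≤ 1} := ⟨⟨0, by simp⟩⟩
  exact ciSup_le fun x => h x.1 x.2

lemma mNorm_nonneg (m : VectorMeasure Ω X) (f : Ω → ℝ) : 0 ≤ mNorm m f :=
  Real.iSup_nonneg fun x => integral_nonneg fun ω => abs_nonneg _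

lemma le_mNorm {m : VectorMeasure Ω X} (H : MBdd m) {f : Ω → ℝ} (hf : MIntegrable m f)
    {x : X →L[ℝ] ℝ} (hx : ‖x‖ ≤ 1) :
    ∫ ω, |f ω| ∂(dualApply m x).totalVariation ≤ mNorm m f := by
  obtain ⟨C, hC⟩ := H f hf
  exact le_ciSup (f := fun x : {x : X →L[ℝ] ℝ // ‖x‖ ≤ 1} =>
    ∫ ω, |f ω| ∂(dualApply m x.1).totalVariation)
    ⟨C, by rintro _ ⟨y, rfl⟩; exact hC y.1 y.2⟩ ⟨x, hx⟩

lemma tv_scale (m : VectorMeasure Ω X) (x : X →L[ℝ] ℝ) :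
    ∃ y : X →L[ℝ] ℝ, ‖y‖ ≤ 1 ∧
      (dualApply m x).totalVariation = ‖x‖₊ • (dualApply m y).totalVariation := by
  by_cases h0 : x = 0
  · refine ⟨0, by simp, ?_⟩
    subst h0
    have : dualApply m (0 : X →L[ℝ] ℝ) = 0 := by
      ext A _; simp [dualApply_apply]
    rw [this, SignedMeasure.totalVariation_zero, smul_zero]
  · have hn : ‖x‖ ≠ 0 := norm_ne_zero_iff.2 h0
    refine ⟨‖x‖⁻¹ • x, ?_, ?_⟩
    · rw [norm_smul, norm_inv, norm_norm, inv_mul_cancel₀ hn]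
    · have e : dualApply m x = ‖x‖₊ • dualApply m (‖x‖⁻¹ • x) := by
        ext A _
        rw [VectorMeasure.smul_apply, dualApply_apply, dualApply_apply]
        simp only [ContinuousLinearMap.smul_apply, smul_eq_mul, NNReal.smul_def, coe_nnnorm]
        rw [← mul_assoc, mul_inv_cancel₀ hn, one_mul]
      conv_lhs => rw [e]
      rw [SignedMeasure.totalVariation, SignedMeasure.toJordanDecomposition_smul,
        JordanDecomposition.smul_posPart, JordanDecomposition.smul_negPart, ← smul_add]
      rfl

lemma le_mNorm' {m : VectorMeasure Ω X} (H : MBdd m) {f : Ω → ℝ} (hf : MIntegrable m f)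
    (x : X →L[ℝ] ℝ) :
    ∫ ω, |f ω| ∂(dualApply m x).totalVariation ≤ ‖x‖ * mNorm m f := by
  obtain ⟨y, hy, e⟩ := tv_scale m x
  rw [e, integral_smul_nnreal_measure, NNReal.smul_def, smul_eq_mul, coe_nnnorm]
  exact mul_le_mul_of_nonneg_left (le_mNorm H hf hy) (norm_nonneg _)

lemma mNorm_add_le {m : VectorMeasure Ω X} (H : MBdd m) {f g : Ω → ℝ} (hf : MIntegrable m f)
    (hg : MIntegrable m g) : mNorm m (f + g) ≤ mNorm m f + mNorm m g := by
  refine mNorm_le fun x hx => ?_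
  refine le_trans ?_ (add_le_add (le_mNorm H hf hx) (le_mNorm H hg hx))
  rw [← integral_add (hf.2.1 x).abs (hg.2.1 x).abs]
  exact integral_mono ((hf.add hg).2.1 x).abs ((hf.2.1 x).abs.add (hg.2.1 x).abs)
    fun ω => abs_add_le _ _

lemma mNorm_smul (m : VectorMeasure Ω X) (c : ℝ) (f : Ω → ℝ) :
    mNorm m (c • f) = |c| * mNorm m f := by
  unfold mNorm
  rw [Real.mul_iSup_of_nonneg (abs_nonneg c)]
  congr 1; ext x
  simp only [Pi.smul_apply, smul_eq_mul, abs_mul]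
  rw [integral_const_mul]

lemma mNorm_mono {m : VectorMeasure Ω X} (H : MBdd m) {f g : Ω → ℝ} (hf : MIntegrable m f)
    (hg : MIntegrable m g)
    (h : ∀ x : X →L[ℝ] ℝ, ∀ᵐ ω ∂(dualApply m x).totalVariation, |f ω| ≤ |g ω|) :
    mNorm m f ≤ mNorm m g := by
  refine mNorm_le fun x hx => le_trans ?_ (le_mNorm H hg hx)
  exact integral_mono_ae (hf.2.1 x).abs (hg.2.1 x).abs (h x)

lemma mNorm_sum_le {m : VectorMeasure Ω X} (H : MBdd m) {f : ℕ → Ω → ℝ}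
    (hf : ∀ k, MIntegrable m (f k)) (s : Finset ℕ) :
    mNorm m (∑ k ∈ s, f k) ≤ ∑ k ∈ s, mNorm m (f k) := by
  induction s using Finset.induction_on with
  | empty =>
    have := mNorm_smul m 0 (0 : Ω → ℝ)
    simp at this
    simp [this]
  | insert i s his ih =>
    rw [Finset.sum_insert his, Finset.sum_insert his]
    exact (mNorm_add_le H (hf i) (MIntegrable.sum hf s)).trans (by gcongr)

lemma mNorm_mean_le {m : VectorMeasure Ω X} (H : MBdd m) {f : ℕ → Ω → ℝ}
    (hf : ∀ k, MIntegrable m (f k)) {b : ℝ} (hb : 0 ≤ b) (hfb : ∀ k, mNorm m (f k) ≤ b) (n : ℕ) :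
    mNorm m ((n : ℝ)⁻¹ • ∑ k ∈ Finset.range n, f k) ≤ b := by
  rw [mNorm_smul]
  rcases Nat.eq_zero_or_pos n with h0 | h0
  · subst h0; simpa using hb
  have hn' : (0 : ℝ) < n := by exact_mod_cast h0
  have h1 : mNorm m (∑ k ∈ Finset.range n, f k) ≤ n * b := by
    refine (mNorm_sum_le H hf _).trans ((Finset.sum_le_sum fun k _ => hfb k).trans ?_)
    simp
  rw [abs_of_nonneg (by positivity), ← div_eq_inv_mul, div_le_iff₀ hn']
  linarith

lemma tv_ac {m : VectorMeasure Ω X} {x₀ : X →L[ℝ] ℝ}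
    (hRyb : ∀ A : Set Ω, MeasurableSet A →
      ((dualApply m x₀).totalVariation A = 0 ↔ semivar m A = 0)) (x : X →L[ℝ] ℝ) :
    (dualApply m x).totalVariation ≪ (dualApply m x₀).totalVariation := by
  refine Measure.AbsolutelyContinuous.mk fun A hA h => ?_
  obtain ⟨y, hy, e⟩ := tv_scale m x
  have h1 := (hRyb A hA).1 h
  have h2 : (dualApply m y).totalVariation A = 0 := by
    refine le_antisymm ?_ zero_le
    rw [← h1]
    exact le_iSup (fun x : {x : X →L[ℝ] ℝ // ‖x‖ ≤ 1} => (dualApply m x.1).totalVariation A) ⟨y, hy⟩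
  rw [e, Measure.smul_apply, h2, smul_zero]

lemma mul_int {ν : Measure Ω} {ψ f : Ω → ℝ} (hψ : Measurable ψ) (hb : ∀ ω, |ψ ω| ≤ 1)
    (hf : Integrable f ν) : Integrable (fun ω => ψ ω * f ω) ν :=
  hf.bdd_mul hψ.aestronglyMeasurable (c := 1) (Eventually.of_forall hb)

lemma mul_int_le {ν : Measure Ω} {ψ f : Ω → ℝ} (hψ : Measurable ψ) (hb : ∀ ω, |ψ ω| ≤ 1)
    (hf : Integrable f ν) : |∫ ω, ψ ω * f ω ∂ν| ≤ ∫ ω, |f ω| ∂ν := by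
  refine (abs_integral_le_integral_abs).trans
    (integral_mono (mul_int hψ hb hf).abs hf.abs fun ω => ?_)
  simp only [abs_mul]
  exact mul_le_of_le_one_left (abs_nonneg _) (hb ω)

lemma functional {m : VectorMeasure Ω X} (H : MBdd m) (x : X →L[ℝ] ℝ) {ψ : Ω → ℝ}
    (hψ : Measurable ψ) (hb : ∀ ω, |ψ ω| ≤ 1) :
    IsBddLinFunctional (MIntegrable m) (mNorm m)
      (fun f => ∫ ω, ψ ω * f ω ∂(dualApply m x).totalVariation) := by
  refine ⟨fun f g hf hg => ?_, fun c f hf => ?_, ‖x‖, fun f hf => ?_⟩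
  · simp only [Pi.add_apply, mul_add]
    exact integral_add (mul_int hψ hb (hf.2.1 x)) (mul_int hψ hb (hg.2.1 x))
  · rw [← integral_const_mul]
    refine integral_congr_ae (Eventually.of_forall fun ω => ?_)
    simp only [Pi.smul_apply, smul_eq_mul]; ring
  · exact (mul_int_le hψ hb (hf.2.1 x)).trans (le_mNorm' H hf x)

lemma bdd_of_weak {E : Type*} [SeminormedAddCommGroup E] [NormedSpace ℝ E] (f : ℕ → E)
    (h : ∀ T : E →L[ℝ] ℝ, Tendsto (fun n => T (f n)) atTop (𝓝 0)) :
    ∃ C : ℝ, ∀ n, ∀ T : E →L[ℝ] ℝ, ‖T‖ ≤ 1 → |T (f n)| ≤ C := by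
  obtain ⟨C, hC⟩ := banach_steinhaus (g := fun n => ContinuousLinearMap.apply ℝ ℝ (f n)) (by
    intro T
    obtain ⟨C, hC⟩ := (h T).norm.bddAbove_range
    exact ⟨C, fun n => hC ⟨n, rfl⟩⟩)
  refine ⟨C, fun n T hT => ?_⟩
  have h1 := (ContinuousLinearMap.apply ℝ ℝ (f n)).le_opNorm T
  have h2 : ‖ContinuousLinearMap.apply ℝ ℝ (f n)‖ * ‖T‖ ≤ C * 1 :=
    mul_le_mul (hC n) hT (norm_nonneg _) ((norm_nonneg _).trans (hC n))
  rw [mul_one] at h2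
  exact h1.trans h2

/-- the space of integrable functions -/
def ESpace (m : VectorMeasure Ω X) : Submodule ℝ (Ω → ℝ) where
  carrier := {f | MIntegrable m f}
  add_mem' hf hg := MIntegrable.add hf hg
  zero_mem' := MIntegrable.zero m
  smul_mem' c _ hf := MIntegrable.smul c hf

lemma weak_bdd {m : VectorMeasure Ω X} (H : MBdd m) (f : ℕ → Ω → ℝ)
    (hf : ∀ n, MIntegrable m (f n)) (hw : WeaklyNullSeq (MIntegrable m) (mNorm m) f) :
    ∃ C : ℝ, ∀ n, mNorm m (f n) ≤ C := by
  classical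
  let p : Seminorm ℝ (ESpace m) := Seminorm.of (fun f => mNorm m f.1)
    (fun f g => mNorm_add_le H f.2 g.2) (fun c f => mNorm_smul m c f.1)
  letI : SeminormedAddCommGroup (ESpace m) := p.toAddGroupSeminorm.toSeminormedAddCommGroup
  have hnorm : ∀ f : ESpace m, ‖f‖ = mNorm m f.1 := fun f => rfl
  letI : NormedSpace ℝ (ESpace m) := ⟨fun c f => by
    rw [hnorm, hnorm]; exact (mNorm_smul m c f.1).le⟩
  obtain ⟨C, hC⟩ := bdd_of_weak (E := ESpace m) (fun n => ⟨f n, hf n⟩) (by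
    intro T
    have := hw (fun u => if hu : MIntegrable m u then T ⟨u, hu⟩ else 0) (by
      refine ⟨fun u v hu hv => ?_, fun c u hu => ?_, ‖T‖, fun u hu => ?_⟩
      · simp only [hu, hv, hu.add hv, dif_pos]
        rw [← map_add]; rfl
      · simp only [hu, hu.smul c, dif_pos]
        rw [← smul_eq_mul, ← map_smul]; rfl
      · simp only [hu, dif_pos]
        exact T.le_opNorm ⟨u, hu⟩)
    refine this.congr fun n => ?_
    simp only [hf n, dif_pos])
  refine ⟨C, fun n => mNorm_le fun x hx => ?_⟩
  set ψ : Ω → ℝ := fun ω => if 0 ≤ f n ω then 1 else -1 with hψ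
  have hψm : Measurable ψ := Measurable.ite (measurableSet_le measurable_const (hf n).1)
    measurable_const measurable_const
  have hψb : ∀ ω, |ψ ω| ≤ 1 := by
    intro ω; simp only [hψ]; split_ifs <;> simp
  have hψV : ∀ ω, ψ ω * f n ω = |f n ω| := by
    intro ω; simp only [hψ]; split_ifs with h
    · rw [abs_of_nonneg h, one_mul]
    · rw [abs_of_neg (not_le.1 h)]; ring
  have hT := functional H x hψm hψb
  let L : ESpace m →ₗ[ℝ] ℝ :=
    { toFun := fun u => ∫ ω, ψ ω * u.1 ω ∂(dualApply m x).totalVariation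
      map_add' := fun u v => hT.1 u.1 v.1 u.2 v.2
      map_smul' := fun c u => hT.2.1 c u.1 u.2 }
  have hL : ∀ u, ‖L u‖ ≤ 1 * ‖u‖ := fun u => by
    rw [one_mul, hnorm]
    exact (mul_int_le hψm hψb (u.2.2.1 x)).trans (le_mNorm H u.2 hx)
  have h1 := hC n (L.mkContinuous 1 hL) (L.mkContinuous_norm_le zero_le_one hL)
  have h2 : (L.mkContinuous 1 hL) ⟨f n, hf n⟩
      = ∫ ω, |f n ω| ∂(dualApply m x).totalVariation := by
    simp only [← hψV]; rfl
  rw [h2] at h1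
  exact (le_abs_self _).trans h1

lemma h_null {m : VectorMeasure Ω X} (H : MBdd m) {x₀ : X →L[ℝ] ℝ}
    (hac : ∀ x : X →L[ℝ] ℝ,
      (dualApply m x).totalVariation ≪ (dualApply m x₀).totalVariation)
    {F g h : ℕ → Ω → ℝ} (hg : ∀ n, MIntegrable m (g n))
    (hh : ∀ n, MIntegrable m (h n)) (hF : ∀ n, F n = g n + h n)
    (hUAC : UnifACNorm (dualApply m x₀).totalVariation (mNorm m) (Set.range g))
    (hdisj : ∀ i j, i ≠ j →
      (fun s => h i s * h j s) =ᵐ[(dualApply m x₀).totalVariation] 0)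
    (hw : ∀ (x : X →L[ℝ] ℝ) (ψ : Ω → ℝ), Measurable ψ → (∀ ω, |ψ ω| ≤ 1) →
      Tendsto (fun n => ∫ ω, ψ ω * F n ω ∂(dualApply m x).totalVariation) atTop (𝓝 0))
    (x : X →L[ℝ] ℝ) :
    Tendsto (fun n => ∫ ω, |h n ω| ∂(dualApply m x).totalVariation) atTop (𝓝 0) := by
  set η := (dualApply m x₀).totalVariation with hη
  set ν := (dualApply m x).totalVariation with hν
  have hd : ∀ᵐ ω ∂η, ∀ i j, i ≠ j → h i ω * h j ω = 0 := by
    rw [ae_all_iff]; intro i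
    rw [ae_all_iff]; intro j
    by_cases hij : i = j
    · exact Eventually.of_forall fun ω hne => absurd hij hne
    · filter_upwards [hdisj i j hij] with ω hω _ using hω
  set E : ℕ → Set Ω := fun N => ⋃ n, ⋃ (_ : N ≤ n), {ω | h n ω ≠ 0} with hE
  have hEm : ∀ N, MeasurableSet (E N) := fun N =>
    MeasurableSet.iUnion fun n => MeasurableSet.iUnion fun _ =>
      (measurableSet_eq_fun (hh n).1 measurable_const).compl
  have hmemE : ∀ N ω, ω ∈ E N ↔ ∃ n, N ≤ n ∧ h n ω ≠ 0 := by
    intro N ω; simp [hE]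
  have hEanti : Antitone E := by
    intro a b hab ω hω
    obtain ⟨n, hn, hn'⟩ := (hmemE b ω).1 hω
    exact (hmemE a ω).2 ⟨n, hab.trans hn, hn'⟩
  have hE0 : η (⋂ N, E N) = 0 := by
    rw [← compl_compl (⋂ N, E N)]
    change _ᶜ ∈ ae η
    filter_upwards [hd] with ω hω hmem
    have hmem' := Set.mem_iInter.1 hmem
    obtain ⟨n, -, hn⟩ := (hmemE 0 ω).1 (hmem' 0)
    obtain ⟨k, hk, hk'⟩ := (hmemE (n + 1) ω).1 (hmem' (n + 1))
    exact mul_ne_zero hn hk' (hω n k (by omega))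
  have hElim : Tendsto (fun N => η (E N)) atTop (𝓝 0) := by
    rw [← hE0]
    exact tendsto_measure_iInter_atTop (fun N => (hEm N).nullMeasurableSet) hEanti
      ⟨0, measure_ne_top _ _⟩
  rw [Metric.tendsto_atTop]
  intro ε hε
  have hx1 : 0 < 2 * (‖x‖ + 1) := by positivity
  obtain ⟨δ, hδ, hδ'⟩ := hUAC (ε / (2 * (‖x‖ + 1))) (by positivity)
  obtain ⟨N, hN⟩ := (hElim.eventually_lt_const (ENNReal.ofReal_pos.2 hδ)).exists
  set P : Set Ω := ⋃ n, {ω | 0 < h n ω} with hP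
  set ψ : Ω → ℝ := (E N).indicator (fun ω => P.indicator (fun _ => (2 : ℝ)) ω - 1) with hψ
  have hPm : MeasurableSet P := MeasurableSet.iUnion fun n =>
    measurableSet_lt measurable_const (hh n).1
  have hψm : Measurable ψ :=
    ((measurable_const.indicator hPm).sub measurable_const).indicator (hEm N)
  have hψb' : ∀ ω, |P.indicator (fun _ => (2 : ℝ)) ω - 1| ≤ 1 := by
    intro ω
    by_cases hω : ω ∈ P
    · simp [hω]; norm_num
    · simp [hω]
  have hψb : ∀ ω, |ψ ω| ≤ 1 := by
    intro ω
    by_cases hω : ω ∈ E N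
    · simp only [hψ, Set.indicator_of_mem hω]; exact hψb' ω
    · simp [hψ, Set.indicator_of_notMem hω]
  have hψh : ∀ k, N ≤ k → ∀ᵐ ω ∂ν, |h k ω| = ψ ω * h k ω := by
    intro k hk
    filter_upwards [(hac x).ae_le hd] with ω hω
    rcases lt_trichotomy (h k ω) 0 with h0 | h0 | h0
    · have h1 : ω ∈ E N := (hmemE N ω).2 ⟨k, hk, h0.ne⟩
      have h2 : ω ∉ P := by
        intro hmem
        obtain ⟨j, hj⟩ := Set.mem_iUnion.1 hmem
        have hj' : 0 < h j ω := hj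
        have hjk : k ≠ j := by rintro rfl; exact lt_asymm h0 hj'
        exact mul_ne_zero h0.ne hj'.ne' (hω k j hjk)
      simp only [hψ, Set.indicator_of_mem h1, Set.indicator_of_notMem h2]
      rw [abs_of_neg h0]; ring
    · simp [h0]
    · have h1 : ω ∈ E N := (hmemE N ω).2 ⟨k, hk, h0.ne'⟩
      have h2 : ω ∈ P := Set.mem_iUnion.2 ⟨k, h0⟩
      simp only [hψ, Set.indicator_of_mem h1, Set.indicator_of_mem h2]
      rw [abs_of_pos h0]; ring
  have hgb : ∀ k, |∫ ω, ψ ω * g k ω ∂ν| ≤ ε / 2 := by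
    intro k
    have e : ∀ ω, ψ ω * g k ω = ψ ω * (E N).indicator (g k) ω := by
      intro ω
      by_cases hω : ω ∈ E N
      · rw [Set.indicator_of_mem hω]
      · simp [hψ, Set.indicator_of_notMem hω]
    simp only [e]
    have hi := (hg k).indicator (hEm N)
    refine (mul_int_le hψm hψb (hi.2.1 x)).trans ((le_mNorm' H hi x).trans ?_)
    have h1 := hδ' (E N) (hEm N) hN (g k) ⟨k, rfl⟩
    calc ‖x‖ * mNorm m ((E N).indicator (g k)) ≤ (‖x‖ + 1) * (ε / (2 * (‖x‖ + 1))) := by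
          gcongr
          · exact mNorm_nonneg _ _
          · linarith
      _ = ε / 2 := by field_simp
  have hev := ((hw x ψ hψm hψb).abs)
  rw [abs_zero] at hev
  obtain ⟨N', hN'⟩ := eventually_atTop.1 (hev.eventually_lt_const (half_pos hε))
  refine ⟨max N N', fun k hk => ?_⟩
  rw [Real.dist_eq, sub_zero, abs_of_nonneg (integral_nonneg fun ω => abs_nonneg _)]
  rw [integral_congr_ae (hψh k ((le_max_left _ _).trans hk))]
  have h1 := hN' k ((le_max_right _ _).trans hk)
  have h2 : ∫ ω, ψ ω * F k ω ∂ν = ∫ ω, ψ ω * g k ω ∂ν + ∫ ω, ψ ω * h k ω ∂ν := by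
    rw [← integral_add (mul_int hψm hψb ((hg k).2.1 x)) (mul_int hψm hψb ((hh k).2.1 x))]
    simp only [hF, Pi.add_apply, mul_add]
    rfl
  have h3 := (abs_le.1 (hgb k)).1
  have h4 := le_abs_self (∫ ω, ψ ω * F k ω ∂ν)
  linarith

lemma g_cesaro {m : VectorMeasure Ω X} (H : MBdd m) {x₀ : X →L[ℝ] ℝ}
    {g : ℕ → Ω → ℝ} (hg : ∀ n, MIntegrable m (g n))
    (hUAC : UnifACNorm (dualApply m x₀).totalVariation (mNorm m) (Set.range g))
    (ρ : ℕ → ℕ)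
    (hL1 : Tendsto (fun n : ℕ => ∫ ω, |((n : ℝ)⁻¹ • ∑ k ∈ Finset.range n, g (ρ k)) ω|
      ∂(dualApply m x₀).totalVariation) atTop (𝓝 0)) :
    Tendsto (fun n : ℕ => mNorm m ((n : ℝ)⁻¹ • ∑ k ∈ Finset.range n, g (ρ k))) atTop (𝓝 0) := by
  set η := (dualApply m x₀).totalVariation with hη
  set a : ℕ → Ω → ℝ := fun n => (n : ℝ)⁻¹ • ∑ k ∈ Finset.range n, g (ρ k) with ha
  have hai : ∀ n, MIntegrable m (a n) := fun n =>
    (MIntegrable.sum (fun k => hg (ρ k)) _).smul _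
  rw [Metric.tendsto_atTop]
  intro ε hε
  obtain ⟨δ, hδ, hδ'⟩ := hUAC (ε / 3) (by positivity)
  set c := mNorm m (fun _ : Ω => (1 : ℝ)) with hc
  have hc0 : 0 ≤ c := mNorm_nonneg _ _
  set d := ε / (3 * (c + 1)) with hd
  have hd0 : 0 < d := by positivity
  obtain ⟨N, hN⟩ := eventually_atTop.1 (hL1.eventually_lt_const (mul_pos hd0 hδ))
  refine ⟨N, fun n hn => ?_⟩
  rw [Real.dist_eq, sub_zero, abs_of_nonneg (mNorm_nonneg _ _)]
  change mNorm m (a n) < ε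
  set A : Set Ω := {ω | d ≤ |a n ω|} with hA
  have hAm : MeasurableSet A := measurableSet_le measurable_const (hai n).1.abs
  have hηA : η A < ENNReal.ofReal δ := by
    have h1 := mul_meas_ge_le_integral_of_nonneg (μ := η) (f := fun ω => |a n ω|)
      (Eventually.of_forall fun ω => abs_nonneg _) ((hai n).2.1 x₀).abs d
    have h2 : d * η.real A < d * δ := lt_of_le_of_lt h1 (hN n hn)
    have h3 : η.real A < δ := lt_of_mul_lt_mul_left h2 hd0.le
    rw [ENNReal.lt_ofReal_iff_toReal_lt (measure_ne_top _ _)]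
    exact h3
  have h1 : mNorm m (A.indicator (a n)) ≤ ε / 3 := by
    have e : A.indicator (a n) = (n : ℝ)⁻¹ • ∑ k ∈ Finset.range n, A.indicator (g (ρ k)) := by
      ext ω
      by_cases hω : ω ∈ A <;> simp [ha, hω]
    rw [e]
    exact mNorm_mean_le H (fun k => (hg (ρ k)).indicator hAm) (by positivity)
      (fun k => hδ' A hAm hηA _ ⟨ρ k, rfl⟩) n
  have h2 : mNorm m (Aᶜ.indicator (a n)) ≤ ε / 3 := by
    have h3 : mNorm m (Aᶜ.indicator (a n)) ≤ mNorm m (d • (fun _ : Ω => (1 : ℝ))) := by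
      refine mNorm_mono H ((hai n).indicator hAm.compl) ((MIntegrable.one m).smul d) fun x =>
        Eventually.of_forall fun ω => ?_
      simp only [Pi.smul_apply, smul_eq_mul, mul_one, abs_of_pos hd0]
      by_cases hω : ω ∈ A
      · simp [hω, hd0.le]
      · rw [Set.indicator_of_mem (show ω ∈ Aᶜ from hω)]
        exact (not_le.1 hω).le
    refine h3.trans ?_
    rw [mNorm_smul, abs_of_pos hd0, ← hc]
    calc d * c ≤ d * (c + 1) := by gcongr; linarith
      _ = ε / 3 := by rw [hd]; field_simp
  have h3 := mNorm_add_le H ((hai n).indicator hAm) ((hai n).indicator hAm.compl)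
  rw [Set.indicator_self_add_compl] at h3
  linarith

/-- if `X` has the weak Banach-Saks property, `m` is separable and positive, and
`L¹(m)` has the subsequence splitting property, then `L¹(m)` has the weak Banach-Saks
property. -/
theorem statement2
    {S : Type*} [MeasurableSpace S] {μ : Measure S} [IsFiniteMeasure μ]
    {X : Type*} [NormedAddCommGroup X] [NormedSpace ℝ X] [CompleteSpace X]
    (B : BFS S μ X)
    {Ω : Type*} [MeasurableSpace Ω] (m : VectorMeasure Ω X)
    (hWBS : WeakBanachSaks X)
    (hsep : SeparableVM m)
    (hpos : ∀ A : Set Ω, MeasurableSet A → ∀ᵐ s ∂μ, 0 ≤ B.J (m A) s)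
    (x₀ : X →L[ℝ] ℝ)
    (hRyb : ∀ A : Set Ω, MeasurableSet A →
      ((dualApply m x₀).totalVariation A = 0 ↔ semivar m A = 0))
    (hSSP : HasSSP ((dualApply m x₀).totalVariation) (MIntegrable m) (mNorm m)) :
    HasWBS (MIntegrable m) (mNorm m) := by
  have H : MBdd m := fun f hf => by
    obtain ⟨v, hv⟩ := hf.abs.2.2 Set.univ MeasurableSet.univ
    exact ⟨‖v‖, fun x hx => key_bound B m hpos hf.abs (fun ω => abs_nonneg _) v hv x hx⟩
  have hac := tv_ac hRyb
  intro f hf hw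
  obtain ⟨C, hC⟩ := weak_bdd H f hf hw
  obtain ⟨σ₁, hσ₁, g, h, hg, hh, hsplit, hgh, hUAC, hdisj⟩ := hSSP f hf ⟨C, hC⟩
  set F : ℕ → Ω → ℝ := fun n => f (σ₁ n) with hF
  have hwF : ∀ (x : X →L[ℝ] ℝ) (ψ : Ω → ℝ), Measurable ψ → (∀ ω, |ψ ω| ≤ 1) →
      Tendsto (fun n => ∫ ω, ψ ω * F n ω ∂(dualApply m x).totalVariation) atTop (𝓝 0) :=
    fun x ψ hψ hb => (hw _ (functional H x hψ hb)).comp hσ₁.tendsto_atTop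
  have hn := h_null H hac hg hh hsplit hUAC hdisj hwF
  set η := (dualApply m x₀).totalVariation with hη
  -- bound on g in L¹(η)
  have hgC : ∀ n, ∫ ω, |g n ω| ∂η ≤ ‖x₀‖ * C := by
    intro n
    have h1 : ∫ ω, |g n ω| ∂η ≤ ∫ ω, |F n ω| ∂η := by
      refine integral_mono_ae ((hg n).2.1 x₀).abs ((hf _).2.1 x₀).abs ?_
      filter_upwards [hgh n] with ω hω
      have e : F n ω = g n ω + h n ω := congrFun (hsplit n) ω
      have hω' : g n ω * h n ω = 0 := hω
      rcases mul_eq_zero.1 hω' with h0 | h0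
      · rw [h0, abs_zero]; exact abs_nonneg _
      · rw [e, h0, add_zero]
    exact h1.trans ((le_mNorm' H (hf _) x₀).trans
      (mul_le_mul_of_nonneg_left (hC _) (norm_nonneg _)))
  obtain ⟨σ₂, hσ₂, hces⟩ := L1_BS η g (fun n => (hg n).1) (fun n => (hg n).2.1 x₀) (by
    intro ε hε
    obtain ⟨δ, hδ, hδ'⟩ := hUAC (ε / (‖x₀‖ + 1)) (by positivity)
    obtain ⟨M, hM⟩ := exists_nat_gt (max 0 (‖x₀‖ * C / δ))
    have hM0 : (0 : ℝ) < M := (le_max_left _ _).trans_lt hM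
    have hM1 : ‖x₀‖ * C < M * δ := (div_lt_iff₀ hδ).1 ((le_max_right _ _).trans_lt hM)
    refine ⟨M, fun n => ?_⟩
    have hset : MeasurableSet {ω | (M : ℝ) < |g n ω|} :=
      measurableSet_lt measurable_const (hg n).1.abs
    have hlt : η {ω | (M : ℝ) < |g n ω|} < ENNReal.ofReal δ := by
      have h1 := mul_meas_ge_le_integral_of_nonneg (μ := η) (f := fun ω => |g n ω|)
        (Eventually.of_forall fun ω => abs_nonneg _) ((hg n).2.1 x₀).abs M
      have h2 : (M : ℝ) * η.real {ω | (M : ℝ) ≤ |g n ω|} < M * δ :=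
        (h1.trans (hgC n)).trans_lt hM1
      have h3 := lt_of_mul_lt_mul_left h2 hM0.le
      rw [ENNReal.lt_ofReal_iff_toReal_lt (measure_ne_top _ _)]
      exact (measureReal_mono (fun ω (hω : (M : ℝ) < |g n ω|) => hω.le)).trans_lt h3
    have h4 := hδ' _ hset hlt (g n) ⟨n, rfl⟩
    refine (le_mNorm' H ((hg n).indicator hset) x₀).trans ?_
    calc ‖x₀‖ * mNorm m (({ω | (M : ℝ) < |g n ω|}).indicator (g n))
        ≤ (‖x₀‖ + 1) * (ε / (‖x₀‖ + 1)) := by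
          gcongr
          · exact mNorm_nonneg _ _
          · linarith
      _ = ε := by field_simp) (by
    intro ψ hψ hb
    have h1 : Tendsto (fun n => ∫ ω, ψ ω * h n ω ∂η) atTop (𝓝 0) :=
      squeeze_zero_norm (fun n => mul_int_le hψ hb ((hh n).2.1 x₀)) (hn x₀)
    have h2 := (hwF x₀ ψ hψ hb).sub h1
    rw [sub_zero] at h2
    refine h2.congr fun n => ?_
    rw [← integral_sub (mul_int hψ hb ((hf _).2.1 x₀)) (mul_int hψ hb ((hh n).2.1 x₀))]
    refine integral_congr_ae (Eventually.of_forall fun ω => ?_)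
    have e : F n ω = g n ω + h n ω := congrFun (hsplit n) ω
    change ψ ω * F n ω - ψ ω * h n ω = ψ ω * g n ω
    rw [e]
    ring)
  -- the disjoint part
  have hz : ∀ k, ∃ v : X, ∀ x : X →L[ℝ] ℝ,
      x v = sIntegral (dualApply m x) (fun ω => |h (σ₂ k) ω|) Set.univ := fun k =>
    (hh (σ₂ k)).abs.2.2 Set.univ MeasurableSet.univ
  choose z hz using hz
  obtain ⟨τ, hτ, hzτ⟩ := hWBS z (by
    intro x
    refine squeeze_zero_norm (fun n => ?_) ((hn x).comp hσ₂.tendsto_atTop)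
    rw [hz, Real.norm_eq_abs]
    refine (abs_sIntegral_le _ ((hh (σ₂ n)).abs.2.1 x)).trans (le_of_eq ?_)
    simp only [abs_abs, Function.comp])
  refine ⟨fun k => σ₁ (σ₂ (τ k)), hσ₁.comp (hσ₂.comp hτ), ?_⟩
  have hG := g_cesaro H hg hUAC (fun k => σ₂ (τ k)) (hces τ hτ)
  have hlim := hG.add hzτ
  rw [add_zero] at hlim
  refine squeeze_zero (fun n => mNorm_nonneg _ _) (fun n => ?_) hlim
  have hgi : MIntegrable m ((n : ℝ)⁻¹ • ∑ k ∈ Finset.range n, g (σ₂ (τ k))) :=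
    (MIntegrable.sum (fun k => hg (σ₂ (τ k))) _).smul _
  have hhi : MIntegrable m ((n : ℝ)⁻¹ • ∑ k ∈ Finset.range n, h (σ₂ (τ k))) :=
    (MIntegrable.sum (fun k => hh (σ₂ (τ k))) _).smul _
  have hai : MIntegrable m ((n : ℝ)⁻¹ • ∑ k ∈ Finset.range n, fun ω => |h (σ₂ (τ k)) ω|) :=
    (MIntegrable.sum (f := fun k ω => |h (σ₂ (τ k)) ω|) (fun k => (hh (σ₂ (τ k))).abs) _).smul _
  have e : (n : ℝ)⁻¹ • ∑ k ∈ Finset.range n, f (σ₁ (σ₂ (τ k)))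
      = (n : ℝ)⁻¹ • ∑ k ∈ Finset.range n, g (σ₂ (τ k))
        + (n : ℝ)⁻¹ • ∑ k ∈ Finset.range n, h (σ₂ (τ k)) := by
    rw [← smul_add, ← Finset.sum_add_distrib]
    simp only [hsplit]
  rw [e]
  refine (mNorm_add_le H hgi hhi).trans (add_le_add le_rfl ?_)
  have hle : ∀ ω, |((n : ℝ)⁻¹ • ∑ k ∈ Finset.range n, h (σ₂ (τ k))) ω|
      ≤ ((n : ℝ)⁻¹ • ∑ k ∈ Finset.range n, fun ω => |h (σ₂ (τ k)) ω|) ω := by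
    intro ω
    simp only [Pi.smul_apply, Finset.sum_apply, smul_eq_mul, abs_mul, abs_inv, Nat.abs_cast]
    gcongr
    exact Finset.abs_sum_le_sum_abs _ _
  refine mNorm_le fun x hx => ?_
  refine (integral_mono (hhi.2.1 x).abs (hai.2.1 x) hle).trans ?_
  refine key_bound B m hpos hai (fun ω => (abs_nonneg _).trans (hle ω)) _ (fun y => ?_) x hx
  rw [map_smul, map_sum, sIntegral_smul, smul_eq_mul]
  congr 1
  have hs : ∀ s : Finset ℕ, ∑ k ∈ s, y (z (τ k))
      = sIntegral (dualApply m y) (∑ k ∈ s, fun ω => |h (σ₂ (τ k)) ω|) Set.univ := by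
    intro s
    induction s using Finset.induction_on with
    | empty => simp [sIntegral]
    | insert i s his ih =>
      rw [Finset.sum_insert his, Finset.sum_insert his, ih, hz, sIntegral_add]
      · exact (hh _).abs.2.1 y
      · exact (MIntegrable.sum (f := fun k ω => |h (σ₂ (τ k)) ω|)
          (fun k => (hh (σ₂ (τ k))).abs) s).2.1 y
  exact hs _

end Paper
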